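/- Let β₀, β₁, κ > 0 and for t > 0 define u_t := v_t + t² w_t, where v_t(x) = t³ V(x/t) + g(x), w_t = −((β₀+β₁)/κ) Δ v_t, V(y₁,y₂) = y₁ e^{−y₁} cos(y₂) and g(x₁,x₂) = sin(πx₁) sin(πx₂). Then u_t converges to g in H³ of the unit square as t → 0⁺: for every pair (a, b) of natural numbers with a + b ≤ 3, lim_{t → 0⁺} ∫_{(0,1)²} |∂₁^a ∂₂^b (u_t − g)(x)|² dx = 0. In particular the H³ norm of the transverse displacement u_t on (0,1)² remains bounded, and bounded away from zero, as t → 0⁺. -/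

import Mathlib

noncomputable section

open Real MeasureTheory Filter

/-- First partial derivative `∂₁` of a function on `ℝ²`. -/
def pd1 (f : ℝ × ℝ → ℝ) : ℝ × ℝ → ℝ := fun p => deriv (fun s => f (s, p.2)) p.1

/-- Second partial derivative `∂₂` of a function on `ℝ²`. -/
def pd2 (f : ℝ × ℝ → ℝ) : ℝ × ℝ → ℝ := fun p => deriv (fun s => f (p.1, s)) p.2

/-- Laplacian `Δ = ∂₁² + ∂₂²` on `ℝ²`. -/
def lap (f : ℝ × ℝ → ℝ) : ℝ × ℝ → ℝ := fun p => pd1 (pd1 f) p + pd2 (pd2 f) p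

/-- `V(y₁, y₂) = y₁ e^{−y₁} cos(y₂)`. -/
def V : ℝ × ℝ → ℝ := fun y => y.1 * Real.exp (-y.1) * Real.cos y.2

/-- `g(x₁, x₂) = sin(π x₁) sin(π x₂)`. -/
def g : ℝ × ℝ → ℝ := fun x => Real.sin (π * x.1) * Real.sin (π * x.2)

/-- `v_t(x) = t³ V(x/t) + g(x)`. -/
def vt (t : ℝ) : ℝ × ℝ → ℝ := fun x => t ^ 3 * V (x.1 / t, x.2 / t) + g x

/-- `w_t = −((β₀ + β₁)/κ) Δ v_t`. -/
def wt (β₀ β₁ κ t : ℝ) : ℝ × ℝ → ℝ := fun x => -((β₀ + β₁) / κ) * lap (vt t) x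

/-- Transverse displacement `u_t = v_t + t² w_t`. -/
def ut (β₀ β₁ κ t : ℝ) : ℝ × ℝ → ℝ := fun x => vt t x + t ^ 2 * wt β₀ β₁ κ t x

/-- The open unit square `(0,1)² ⊂ ℝ²`. -/
def usq : Set (ℝ × ℝ) := Set.Ioo (0 : ℝ) 1 ×ˢ Set.Ioo (0 : ℝ) 1

/-- Ansatz family closed under both partial derivatives. -/
def FF (t s A B φ D ψ χ : ℝ) : ℝ × ℝ → ℝ := fun x =>
  s * ((A + B * (x.1 / t)) * Real.exp (-(x.1 / t)) * Real.cos (x.2 / t + φ))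
    + D * (Real.sin (π * x.1 + ψ) * Real.sin (π * x.2 + χ))

lemma pd1_FF (t s A B φ D ψ χ : ℝ) :
    pd1 (FF t s A B φ D ψ χ) = FF t (s / t) (B - A) (-B) φ (D * π) (ψ + π / 2) χ := by
  funext p
  have h1 : HasDerivAt (fun z : ℝ => z / t) (1 / t) p.1 := (hasDerivAt_id p.1).div_const t
  have h2 : HasDerivAt (fun z : ℝ => π * z + ψ) (π * 1) p.1 :=
    ((hasDerivAt_id p.1).const_mul π).add_const ψ
  have h3 := (((((h1.const_mul B).const_add A).mul h1.neg.exp).mul_const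
    (Real.cos (p.2 / t + φ))).const_mul s).add
    ((h2.sin.mul_const (Real.sin (π * p.2 + χ))).const_mul D)
  refine h3.deriv.trans ?_
  simp only [FF]
  rw [show π * p.1 + (ψ + π / 2) = (π * p.1 + ψ) + π / 2 by ring, Real.sin_add_pi_div_two]
  simp only [Pi.neg_apply]
  ring

lemma pd2_FF (t s A B φ D ψ χ : ℝ) :
    pd2 (FF t s A B φ D ψ χ) = FF t (s / t) A B (φ + π / 2) (D * π) ψ (χ + π / 2) := by
  funext p
  have h1 : HasDerivAt (fun z : ℝ => z / t + φ) (1 / t) p.2 :=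
    ((hasDerivAt_id p.2).div_const t).add_const φ
  have h2 : HasDerivAt (fun z : ℝ => π * z + χ) (π * 1) p.2 :=
    ((hasDerivAt_id p.2).const_mul π).add_const χ
  have h3 := ((h1.cos.const_mul ((A + B * (p.1 / t)) * Real.exp (-(p.1 / t)))).const_mul s).add
    ((h2.sin.const_mul (Real.sin (π * p.1 + ψ))).const_mul D)
  refine h3.deriv.trans ?_
  simp only [FF]
  rw [show π * p.2 + (χ + π / 2) = (π * p.2 + χ) + π / 2 by ring, Real.sin_add_pi_div_two,
    show p.2 / t + (φ + π / 2) = (p.2 / t + φ) + π / 2 by ring, Real.cos_add_pi_div_two]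
  ring

lemma pd1_iter (a : ℕ) (A B : ℝ) : ∃ A₁ B₁ : ℝ, ∀ t s φ D ψ χ : ℝ,
    pd1^[a] (FF t s A B φ D ψ χ)
      = FF t (s / t ^ a) A₁ B₁ φ (D * π ^ a) (ψ + a * (π / 2)) χ := by
  induction a with
  | zero => exact ⟨A, B, fun t s φ D ψ χ => by simp⟩
  | succ n ih =>
    obtain ⟨A₁, B₁, h⟩ := ih
    refine ⟨B₁ - A₁, -B₁, fun t s φ D ψ χ => ?_⟩
    rw [Function.iterate_succ_apply', h, pd1_FF]
    congr 1
    · rw [div_div, pow_succ]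
    · ring
    · push_cast; ring

lemma pd2_iter (b : ℕ) (t s A B φ D ψ χ : ℝ) :
    pd2^[b] (FF t s A B φ D ψ χ)
      = FF t (s / t ^ b) A B (φ + b * (π / 2)) (D * π ^ b) ψ (χ + b * (π / 2)) := by
  induction b with
  | zero => simp
  | succ n ih =>
    rw [Function.iterate_succ_apply', ih, pd2_FF]
    congr 1
    · rw [div_div, pow_succ]
    · push_cast; ring
    · ring
    · push_cast; ring

lemma g_eq (x : ℝ × ℝ) : g x = Real.sin (π * x.1 + 0) * Real.sin (π * x.2 + 0) := by
  simp [g]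

lemma vt_eq (t : ℝ) : vt t = FF t (t ^ 3) 0 1 0 1 0 0 := by
  funext x; simp [vt, FF, V, g]

lemma ut_eq (β₀ β₁ κ t : ℝ) (ht : t ≠ 0) : ut β₀ β₁ κ t
    = FF t (t ^ 3) (2 * ((β₀ + β₁) / κ)) 1 0 (2 * ((β₀ + β₁) / κ) * π ^ 2 * t ^ 2 + 1) 0 0 := by
  funext x
  simp only [ut, wt, lap]
  rw [vt_eq, pd1_FF, pd1_FF, pd2_FF, pd2_FF]
  simp only [FF]
  rw [show x.2 / t + (0 + π / 2 + π / 2) = x.2 / t + π by ring,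
    show π * x.2 + (0 + π / 2 + π / 2) = π * x.2 + π by ring,
    show π * x.1 + (0 + π / 2 + π / 2) = π * x.1 + π by ring,
    Real.cos_add_pi, Real.sin_add_pi, Real.sin_add_pi]
  simp only [add_zero]
  generalize (β₀ + β₁) / κ = c
  generalize Real.exp (-(x.1 / t)) = e
  field_simp
  ring

lemma ut_sub_eq (β₀ β₁ κ t : ℝ) (ht : t ≠ 0) : (fun y => ut β₀ β₁ κ t y - g y)
    = FF t (t ^ 3) (2 * ((β₀ + β₁) / κ)) 1 0 (2 * ((β₀ + β₁) / κ) * π ^ 2 * t ^ 2 + 0) 0 0 := by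
  funext x
  rw [ut_eq _ _ _ _ ht, g_eq]
  simp only [FF]
  ring

lemma usq_meas : MeasurableSet usq := measurableSet_Ioo.prod measurableSet_Ioo

lemma usq_open : IsOpen usq := isOpen_Ioo.prod isOpen_Ioo

lemma usq_fin : volume usq ≠ ⊤ := by
  rw [usq, Measure.volume_eq_prod, Measure.prod_prod]
  simp

lemma prof_bound (A B y : ℝ) (hy : 0 ≤ y) : |(A + B * y) * Real.exp (-y)| ≤ |A| + |B| := by
  have h1 : Real.exp (-y) ≤ 1 := Real.exp_le_one_iff.2 (by linarith)
  have h0 := Real.exp_pos (-y)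
  have h2 : y * Real.exp (-y) ≤ 1 := by
    have h3 : y ≤ Real.exp y := by linarith [Real.add_one_le_exp y]
    calc y * Real.exp (-y) ≤ Real.exp y * Real.exp (-y) := by gcongr
      _ = 1 := by rw [← Real.exp_add]; simp
  have h4 : 0 ≤ y * Real.exp (-y) := by positivity
  calc |(A + B * y) * Real.exp (-y)| = |A * Real.exp (-y) + B * (y * Real.exp (-y))| := by
        congr 1; ring
    _ ≤ |A * Real.exp (-y)| + |B * (y * Real.exp (-y))| := abs_add_le _ _
    _ = |A| * Real.exp (-y) + |B| * (y * Real.exp (-y)) := by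
        rw [abs_mul, abs_mul, abs_of_pos h0, abs_of_nonneg h4]
    _ ≤ |A| * 1 + |B| * 1 := by gcongr
    _ = |A| + |B| := by ring

lemma prof_tendsto (A B x : ℝ) (hx : 0 < x) :
    Tendsto (fun t : ℝ => (A + B * (x / t)) * Real.exp (-(x / t)))
      (nhdsWithin 0 (Set.Ioi 0)) (nhds 0) := by
  have h1 : Tendsto (fun t : ℝ => x / t) (nhdsWithin 0 (Set.Ioi 0)) atTop := by
    simp only [div_eq_mul_inv]
    exact tendsto_inv_nhdsGT_zero.const_mul_atTop hx
  have h2 : Tendsto (fun y : ℝ => (A + B * y) * Real.exp (-y)) atTop (nhds 0) := by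
    have e0 := (Real.tendsto_pow_mul_exp_neg_atTop_nhds_zero 0).const_mul A
    have e1 := (Real.tendsto_pow_mul_exp_neg_atTop_nhds_zero 1).const_mul B
    have := e0.add e1
    simp only [mul_zero, add_zero] at this
    refine this.congr fun y => ?_
    ring
  exact h2.comp h1

lemma key (A B φ ψ χ p q r : ℝ) (n : ℕ) (hn : n ≤ 3) :
    Tendsto (fun t : ℝ => ∫ x in usq, (FF t (t ^ 3 / t ^ n) A B φ ((p * t ^ 2 + q) * r) ψ χ x) ^ 2)
      (nhdsWithin 0 (Set.Ioi 0))
      (nhds (∫ x in usq, (q * r * (Real.sin (π * x.1 + ψ) * Real.sin (π * x.2 + χ))) ^ 2)) := by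
  have hev : ∀ᶠ t : ℝ in nhdsWithin 0 (Set.Ioi 0), 0 < t ∧ t < 1 :=
    Ioo_mem_nhdsGT (by norm_num : (0 : ℝ) < 1)
  have hs : ∀ t : ℝ, 0 < t → t < 1 → |t ^ 3 / t ^ n| ≤ 1 := by
    intro t h0 h1
    rw [abs_of_nonneg (by positivity), div_le_one (by positivity)]
    exact pow_le_pow_of_le_one h0.le h1.le hn
  apply tendsto_integral_filter_of_dominated_convergence
    (fun _ => ((|A| + |B|) + (|p| + |q|) * |r|) ^ 2)
  · refine Eventually.of_forall fun t => ?_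
    have : Continuous (fun x => (FF t (t ^ 3 / t ^ n) A B φ ((p * t ^ 2 + q) * r) ψ χ x) ^ 2) := by
      unfold FF
      fun_prop
    exact this.aestronglyMeasurable
  · filter_upwards [hev] with t ht
    refine (ae_restrict_iff' usq_meas).2 (Eventually.of_forall fun x hx => ?_)
    obtain ⟨⟨hx0, -⟩, -⟩ := hx
    rw [Real.norm_eq_abs, abs_pow]
    refine pow_le_pow_left₀ (abs_nonneg _) ?_ 2
    refine (abs_add_le _ _).trans ?_
    have hb := prof_bound A B (x.1 / t) (div_pos hx0 ht.1).le
    have hc := Real.abs_cos_le_one (x.2 / t + φ)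
    have hs1 := Real.abs_sin_le_one (π * x.1 + ψ)
    have hs2 := Real.abs_sin_le_one (π * x.2 + χ)
    have hst := hs t ht.1 ht.2
    have hp : |p * t ^ 2 + q| ≤ |p| + |q| := by
      refine (abs_add_le _ _).trans ?_
      rw [abs_mul, abs_of_nonneg (sq_nonneg t)]
      have : t ^ 2 ≤ 1 := pow_le_one₀ ht.1.le ht.2.le
      nlinarith [abs_nonneg p]
    rw [abs_mul, abs_mul _ (Real.cos _), abs_mul _ (Real.sin _ * _), abs_mul (Real.sin _),
      abs_mul _ r]
    calc _ ≤ 1 * ((|A| + |B|) * 1) + (|p| + |q|) * |r| * (1 * 1) := by gcongr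
      _ = _ := by ring
  · exact integrableOn_const usq_fin
  · refine (ae_restrict_iff' usq_meas).2 (Eventually.of_forall fun x hx => ?_)
    obtain ⟨⟨hx0, -⟩, -⟩ := hx
    refine Tendsto.pow ?_ 2
    have h1 : Tendsto (fun t : ℝ => t ^ 3 / t ^ n * ((A + B * (x.1 / t)) * Real.exp (-(x.1 / t))
        * Real.cos (x.2 / t + φ))) (nhdsWithin 0 (Set.Ioi 0)) (nhds 0) := by
      refine squeeze_zero_norm' ?_ ((prof_tendsto A B x.1 hx0).abs.trans (by simp))
      filter_upwards [hev] with t ht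
      rw [Real.norm_eq_abs, abs_mul, abs_mul _ (Real.cos _)]
      have hc := Real.abs_cos_le_one (x.2 / t + φ)
      have hst := hs t ht.1 ht.2
      calc _ ≤ 1 * (|(A + B * (x.1 / t)) * Real.exp (-(x.1 / t))| * 1) := by gcongr
        _ = _ := by ring
    have h2 : Tendsto (fun t : ℝ => (p * t ^ 2 + q) * r) (nhdsWithin 0 (Set.Ioi 0))
        (nhds (q * r)) := by
      have : Continuous (fun t : ℝ => (p * t ^ 2 + q) * r) := by fun_prop
      have h := (this.tendsto 0).mono_left (nhdsWithin_le_nhds (s := Set.Ioi (0 : ℝ)))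
      simpa using h
    have h3 := h1.add (h2.mul_const (Real.sin (π * x.1 + ψ) * Real.sin (π * x.2 + χ)))
    rw [zero_add] at h3
    exact h3

/-- Limits of the L² norms of the derivatives, for a coefficient `p t² + q`. -/
lemma key2 (A p q : ℝ) (a b : ℕ) (hab : a + b ≤ 3) :
    Tendsto (fun t : ℝ => ∫ x in usq,
        (pd1^[a] (pd2^[b] (FF t (t ^ 3) A 1 0 (p * t ^ 2 + q) 0 0)) x) ^ 2)
      (nhdsWithin 0 (Set.Ioi 0))
      (nhds (∫ x in usq, (q * (π ^ b * π ^ a) *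
        (Real.sin (π * x.1 + (0 + a * (π / 2))) * Real.sin (π * x.2 + (0 + b * (π / 2))))) ^ 2)) := by
  obtain ⟨A₁, B₁, h⟩ := pd1_iter a A 1
  have := key A₁ B₁ (0 + b * (π / 2)) (0 + a * (π / 2)) (0 + b * (π / 2)) p q (π ^ b * π ^ a)
    (a + b) hab
  refine this.congr fun t => ?_
  rw [pd2_iter, h, div_div, ← pow_add t, add_comm b a, mul_assoc (p * t ^ 2 + q)]

lemma g_pos : 0 < ∫ x in usq, (Real.sin (π * x.1) * Real.sin (π * x.2)) ^ 2 := by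
  have hcont : Continuous (fun x : ℝ × ℝ => (Real.sin (π * x.1) * Real.sin (π * x.2)) ^ 2) := by
    fun_prop
  rw [setIntegral_pos_iff_support_of_nonneg_ae]
  · have hsub : usq ⊆ Function.support
        (fun x : ℝ × ℝ => (Real.sin (π * x.1) * Real.sin (π * x.2)) ^ 2) ∩ usq := by
      intro x hx
      refine ⟨?_, hx⟩
      obtain ⟨⟨h1, h2⟩, h3, h4⟩ := hx
      have hpi := Real.pi_pos
      have e1 := Real.sin_pos_of_pos_of_lt_pi (x := π * x.1) (by positivity) (by nlinarith)
      have e2 := Real.sin_pos_of_pos_of_lt_pi (x := π * x.2) (by positivity) (by nlinarith)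
      exact (by positivity : 0 < (Real.sin (π * x.1) * Real.sin (π * x.2)) ^ 2).ne'
    refine lt_of_lt_of_le ?_ (measure_mono hsub)
    exact usq_open.measure_pos volume ⟨(1/2, 1/2), by simp only [usq, Set.mem_prod, Set.mem_Ioo]; norm_num⟩
  · exact Eventually.of_forall fun x => sq_nonneg _
  · have : IntegrableOn (fun _ : ℝ × ℝ => (1 : ℝ)) usq := integrableOn_const usq_fin
    refine Integrable.mono' this hcont.aestronglyMeasurable (Eventually.of_forall fun x => ?_)
    rw [Real.norm_eq_abs, abs_pow, abs_mul]
    exact pow_le_one₀ (by positivity)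
      (mul_le_one₀ (Real.abs_sin_le_one _) (abs_nonneg _) (Real.abs_sin_le_one _))

/-- `u_t → g` in `H³((0,1)²)` as `t → 0⁺` (all mixed derivatives of
order ≤ 3 of `u_t − g` tend to `0` in `L²`); in particular the `H³` norm of `u_t`
remains bounded, and bounded away from zero, as `t → 0⁺`. -/
theorem stmt_11 (β₀ β₁ κ : ℝ) (hβ₀ : 0 < β₀) (hβ₁ : 0 < β₁) (hκ : 0 < κ) :
    (∀ a b : ℕ, a + b ≤ 3 →
      Tendsto
        (fun t : ℝ =>
          ∫ x in usq, (pd1^[a] (pd2^[b] (fun y => ut β₀ β₁ κ t y - g y)) x) ^ 2)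
        (nhdsWithin 0 (Set.Ioi 0)) (nhds 0)) ∧
    ∃ c C t₀ : ℝ, 0 < c ∧ 0 < t₀ ∧
      ∀ t : ℝ, 0 < t → t < t₀ →
        c ≤ (∑ a ∈ Finset.range 4, ∑ b ∈ Finset.range (4 - a),
              ∫ x in usq, (pd1^[a] (pd2^[b] (ut β₀ β₁ κ t)) x) ^ 2) ∧
        (∑ a ∈ Finset.range 4, ∑ b ∈ Finset.range (4 - a),
              ∫ x in usq, (pd1^[a] (pd2^[b] (ut β₀ β₁ κ t)) x) ^ 2) ≤ C := by
  have hpos : ∀ᶠ t : ℝ in nhdsWithin 0 (Set.Ioi 0), 0 < t := self_mem_nhdsWithin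
  refine ⟨fun a b hab => ?_, ?_⟩
  · have h := key2 (2 * ((β₀ + β₁) / κ)) (2 * ((β₀ + β₁) / κ) * π ^ 2) 0 a b hab
    have h' := h.congr' (f₂ := fun t : ℝ =>
          ∫ x in usq, (pd1^[a] (pd2^[b] (fun y => ut β₀ β₁ κ t y - g y)) x) ^ 2) (by
      filter_upwards [hpos] with t ht
      rw [ut_sub_eq _ _ _ _ ht.ne'])
    simpa using h'
  · let L : ℕ → ℕ → ℝ := fun a b => ∫ x in usq, (1 * (π ^ b * π ^ a) *
        (Real.sin (π * x.1 + (0 + a * (π / 2))) * Real.sin (π * x.2 + (0 + b * (π / 2))))) ^ 2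
    have hT : Tendsto (fun t : ℝ => ∑ a ∈ Finset.range 4, ∑ b ∈ Finset.range (4 - a),
              ∫ x in usq, (pd1^[a] (pd2^[b] (ut β₀ β₁ κ t)) x) ^ 2)
        (nhdsWithin 0 (Set.Ioi 0))
        (nhds (∑ a ∈ Finset.range 4, ∑ b ∈ Finset.range (4 - a), L a b)) := by
      refine tendsto_finsetSum _ fun a ha => tendsto_finsetSum _ fun b hb => ?_
      rw [Finset.mem_range] at ha hb
      have h := key2 (2 * ((β₀ + β₁) / κ)) (2 * ((β₀ + β₁) / κ) * π ^ 2) 1 a b (by omega)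
      refine h.congr' ?_
      filter_upwards [hpos] with t ht
      rw [ut_eq _ _ _ _ ht.ne']
    have hL : ∀ a b, 0 ≤ L a b := fun a b => integral_nonneg fun x => sq_nonneg _
    have hS : 0 < ∑ a ∈ Finset.range 4, ∑ b ∈ Finset.range (4 - a), L a b := by
      have h00 : 0 < L 0 0 := by
        have := g_pos
        simpa [L] using this
      refine Finset.sum_pos' (fun a _ => Finset.sum_nonneg fun b _ => hL a b) ⟨0, by simp, ?_⟩
      exact Finset.sum_pos' (fun b _ => hL 0 b) ⟨0, by simp, h00⟩
    generalize (∑ a ∈ Finset.range 4, ∑ b ∈ Finset.range (4 - a), L a b) = S at hT hS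
    have hev := hT.eventually (Ioo_mem_nhds (show S / 2 < S by linarith) (show S < S + 1 by linarith))
    obtain ⟨t₀, ht₀, hsub⟩ := (mem_nhdsGT_iff_exists_Ioo_subset).1 hev
    exact ⟨S / 2, S + 1, t₀, by linarith, ht₀, fun t h0 h1 =>
      ⟨(hsub ⟨h0, h1⟩).1.le, (hsub ⟨h0, h1⟩).2.le⟩⟩

end
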